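/- Let G be a graph of order m ≥ 3 and size e with χ(G) = χ_la(G) = t. Suppose there exists a local antimagic labeling f of G with c(f) = t. Let n ≥ 2 be an integer with m ≡ n (mod 2). If f⁺(u) ≠ (m−n)(2e+mn+1)/2 for every vertex u of G, then χ_la(G ∨ O_n) = χ_la(G) + 1. -/

import Mathlib

open Finset SimpleGraph
open scoped Classical

/-- The induced vertex label (weight) of `x`: the sum of `f` over all edges incident to `x`. -/
noncomputable def vertexWeight {V : Type*} [Fintype V] (G : SimpleGraph V)
    (f : Sym2 V → ℕ) (x : V) : ℕ :=
  ∑ e ∈ G.edgeFinset.filter (fun e => x ∈ e), f e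

/-- `f` is a local antimagic labeling of `G`: it restricts to a bijection from the edge set of
`G` onto `{1, …, q}` (where `q` is the number of edges), and adjacent vertices get distinct
induced vertex labels. -/
def IsLocalAntimagic {V : Type*} [Fintype V] (G : SimpleGraph V) (f : Sym2 V → ℕ) : Prop :=
  Set.BijOn f G.edgeSet (Set.Icc 1 G.edgeSet.ncard) ∧
  ∀ ⦃x y : V⦄, G.Adj x y → vertexWeight G f x ≠ vertexWeight G f y

/-- The number of distinct induced vertex labels, `c(f)`. -/
noncomputable def colorCount {V : Type*} [Fintype V] (G : SimpleGraph V)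
    (f : Sym2 V → ℕ) : ℕ :=
  (Finset.univ.image (vertexWeight G f)).card

/-- The local antimagic chromatic number `χ_la(G)`. -/
noncomputable def chiLA {V : Type*} [Fintype V] (G : SimpleGraph V) : ℕ :=
  sInf { n | ∃ f : Sym2 V → ℕ, IsLocalAntimagic G f ∧ colorCount G f = n }

/-- The join `G ∨ H` of two vertex-disjoint graphs. -/
def joinG {α β : Type*} (G : SimpleGraph α) (H : SimpleGraph β) : SimpleGraph (α ⊕ β) :=
  SimpleGraph.fromRel (fun x y =>
    (∃ a b, x = Sum.inl a ∧ y = Sum.inl b ∧ G.Adj a b) ∨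
    (∃ a b, x = Sum.inr a ∧ y = Sum.inr b ∧ H.Adj a b) ∨
    (∃ a b, x = Sum.inl a ∧ y = Sum.inr b))


/-- Centred magic rectangle: zero row and column sums, entries of the parity of `m * n + 1`,
pairwise distinct and of absolute value less than `m * n`. -/
def Mg (m n : ℕ) : Prop := ∃ X : ℕ → ℕ → ℤ,
  (∀ i < m, ∑ j ∈ Finset.range n, X i j = 0) ∧
  (∀ j < n, ∑ i ∈ Finset.range m, X i j = 0) ∧
  (∀ i < m, ∀ j < n, |X i j| < (m : ℤ) * n ∧ (X i j + (m : ℤ) * n + 1) % 2 = 0) ∧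
  (∀ i < m, ∀ j < n, ∀ i' < m, ∀ j' < n, X i j = X i' j' → i = i' ∧ j = j')

lemma Mg.symm {m n : ℕ} (h : Mg m n) : Mg n m := by
  obtain ⟨X, h1, h2, h3, h4⟩ := h
  refine ⟨fun i j => X j i, h2, h1, fun i hi j hj => ?_, fun i hi j hj i' hi' j' hj' h => ?_⟩
  · rw [mul_comm]; exact h3 j hj i hi
  · exact (h4 j hj i hi j' hj' i' hi' h).symm

/-- The sign of row `r` of a `4 × 2` block. -/
def sg4 (r : ℕ) : ℤ := if r = 0 ∨ r = 3 then 1 else -1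

lemma sum_pairs (k : ℕ) (c d : ℤ) :
    ∑ j ∈ Finset.range (2 * k), (if j % 2 = 0 then (1 : ℤ) else -1) * d * (c + 8 * ((j / 2 : ℕ) : ℤ)) = 0 := by
  induction k with
  | zero => simp
  | succ k ih =>
    rw [show 2 * (k + 1) = 2 * k + 1 + 1 by ring, Finset.sum_range_succ, Finset.sum_range_succ, ih]
    have h1 : (2 * k + 1) % 2 = 1 := by omega
    have h2 : (2 * k) % 2 = 0 := by omega
    have h3 : (2 * k + 1) / 2 = k := by omega
    have h4 : (2 * k) / 2 = k := by omega
    rw [h1, h2, h3, h4]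
    simp

lemma Mg.add4 {m n : ℕ} (hn : n % 2 = 0) (h : Mg m n) : Mg (m + 4) n := by
  obtain ⟨X, h1, h2, h3, h4⟩ := h
  obtain ⟨k, rfl⟩ : ∃ k, n = 2 * k := ⟨n / 2, by omega⟩
  set Y : ℕ → ℕ → ℤ := fun r j => (if j % 2 = 0 then (1 : ℤ) else -1) * sg4 r *
    (((m : ℤ) * (2 * k : ℕ) + 2 * r + 1) + 8 * ((j / 2 : ℕ) : ℤ)) with hY
  set Z : ℕ → ℕ → ℤ := fun i j => if i < m then X i j else Y (i - m) j with hZ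
  have hZ1 : ∀ i < m, ∀ j, Z i j = X i j := fun i hi j => by simp [hZ, hi]
  have hZ2 : ∀ r j, Z (m + r) j = Y r j := fun r j => by simp [hZ]
  have hYabs : ∀ r j, |Y r j| = ((m : ℤ) * (2 * k : ℕ) + 2 * r + 1) + 8 * ((j / 2 : ℕ) : ℤ) := by
    intro r j
    have hpos : 0 ≤ ((m : ℤ) * (2 * k : ℕ) + 2 * r + 1) + 8 * ((j / 2 : ℕ) : ℤ) := by positivity
    simp only [hY, abs_mul, sg4]
    rw [abs_of_nonneg hpos]
    split_ifs <;> simp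
  have hcase : ∀ i < m + 4, i < m ∨ ∃ r < 4, i = m + r := by
    intro i hi
    by_cases h : i < m
    · exact Or.inl h
    · exact Or.inr ⟨i - m, by omega, by omega⟩
  refine ⟨Z, ?_, ?_, ?_, ?_⟩
  · intro i hi
    rcases hcase i hi with h | ⟨r, hr, rfl⟩
    · simp only [hZ1 i h]; exact h1 i h
    · simp only [hZ2, hY]
      exact sum_pairs k _ _
  · intro j hj
    rw [Finset.sum_range_add, Finset.sum_congr rfl (fun i hi => hZ1 i (Finset.mem_range.1 hi) j), h2 j hj]
    simp only [hZ2, hY, Finset.sum_range_succ, Finset.sum_range_zero, sg4]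
    norm_num
    split_ifs <;> ring
  · intro i hi j hj
    rcases hcase i hi with h | ⟨r, hr, rfl⟩
    · rw [hZ1 i h]
      obtain ⟨ha, hb⟩ := h3 i h j hj
      constructor
      · push_cast at ha ⊢; nlinarith
      · push_cast at hb ⊢
        rw [show ((m : ℤ) + 4) * (2 * k) = m * (2 * k) + 2 * (4 * k) by ring]; omega
    · rw [hZ2]
      constructor
      · rw [hYabs]
        push_cast
        have : (j : ℤ) / 2 + 1 ≤ k := by omega
        nlinarith
      · simp only [hY, sg4]
        push_cast
        rw [show ((m : ℤ) + 4) * (2 * k) = 2 * (m * k) + 2 * (4 * k) by ring,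
          show (m : ℤ) * (2 * k) = 2 * (m * k) by ring]
        generalize (m : ℤ) * k = P
        split_ifs <;> omega
  · have key : ∀ i < m, ∀ j < 2 * k, ∀ r j', X i j ≠ Y r j' := by
      intro i hi j hj r j' h
      have := (h3 i hi j hj).1
      rw [h, hYabs] at this
      have : (0:ℤ) ≤ ((j' / 2 : ℕ) : ℤ) := by positivity
      omega
    intro i hi j hj i' hi' j' hj' h
    rcases hcase i hi with h' | ⟨r, hr, rfl⟩ <;> rcases hcase i' hi' with h'' | ⟨r', hr', rfl⟩
    · rw [hZ1 i h', hZ1 i' h''] at h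
      exact h4 i h' j hj i' h'' j' hj' h
    · rw [hZ1 i h', hZ2] at h
      exact absurd h (key _ h' _ hj _ _)
    · rw [hZ1 i' h'', hZ2] at h
      exact absurd h.symm (key _ h'' _ hj' _ _)
    · rw [hZ2, hZ2] at h
      have e1 := hYabs r j
      rw [h, hYabs] at e1
      have hrr : r = r' := by omega
      subst hrr
      have hj2 : j / 2 = j' / 2 := by omega
      refine ⟨rfl, ?_⟩
      have hpos : (0 : ℤ) < ((m : ℤ) * (2 * k : ℕ) + 2 * r + 1) + 8 * ((j' / 2 : ℕ) : ℤ) := by positivity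
      simp only [hY, hj2] at h
      have h := mul_right_cancel₀ hpos.ne' h
      have hs : sg4 r ≠ 0 := by unfold sg4; split_ifs <;> simp
      have h := mul_right_cancel₀ hs h
      split_ifs at h <;> omega

lemma Mg.zero (n : ℕ) : Mg 0 n := ⟨fun _ _ => 0, by simp, by simp, by simp, by simp⟩

/-- The `2 × 6` seed row. -/
def seed26 (j : ℕ) : ℤ :=
  if j = 0 then 7 else if j = 1 then 11 else if j = 2 then -1 else if j = 3 then -3
  else if j = 4 then -5 else -9

set_option maxHeartbeats 4000000 in
lemma Mg.two_six : Mg 2 6 := by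
  refine ⟨fun i j => if i = 0 then seed26 j else - seed26 j, by decide, by decide, by decide, ?_⟩
  intro i hi j hj i' hi' j' hj' h
  simp only [seed26] at h
  split_ifs at h <;> omega

lemma Mg.add4_mul {m n : ℕ} (hn : n % 2 = 0) (h : Mg m n) (k : ℕ) : Mg (m + 4 * k) n := by
  induction k with
  | zero => exact h
  | succ k ih => exact ih.add4 hn

lemma Mg.even {m n : ℕ} (hm : 3 ≤ m) (hn : 2 ≤ n) (hm2 : m % 2 = 0) (hn2 : n % 2 = 0) : Mg m n := by
  by_cases h : m % 4 = 0
  · have := (Mg.zero n).add4_mul hn2 (m / 4)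
    rwa [show 0 + 4 * (m / 4) = m by omega] at this
  by_cases h' : n % 4 = 0
  · have := ((Mg.zero m).add4_mul hm2 (n / 4)).symm
    rwa [show 0 + 4 * (n / 4) = n by omega] at this
  have h1 := Mg.two_six.symm.add4_mul (by norm_num) ((m - 6) / 4)
  rw [show 6 + 4 * ((m - 6) / 4) = m by omega] at h1
  have h2 := h1.symm.add4_mul hm2 ((n - 2) / 4)
  rw [show 2 + 4 * ((n - 2) / 4) = n by omega] at h2
  exact h2.symm

/-- Centred magic rectangle with `m` rows and `2 q + 1` columns indexed by `-q, …, q`. -/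
def MO (m q : ℕ) : Prop := ∃ X : ℕ → ℤ → ℤ,
  (∀ i < m, ∑ j ∈ Finset.Icc (-(q : ℤ)) q, X i j = 0) ∧
  (∀ j, |j| ≤ (q : ℤ) → ∑ i ∈ Finset.range m, X i j = 0) ∧
  (∀ i < m, ∀ j, |j| ≤ (q : ℤ) → 2 * |X i j| < (m : ℤ) * (2 * q + 1)) ∧
  (∀ i < m, ∀ j, |j| ≤ (q : ℤ) → ∀ i' < m, ∀ j', |j'| ≤ (q : ℤ) → X i j = X i' j' → i = i' ∧ j = j')

lemma sum_Icc_eq_range (f : ℤ → ℤ) (q : ℕ) :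
    ∑ j ∈ Finset.Icc (-(q : ℤ)) q, f j = ∑ k ∈ Finset.range (2 * q + 1), f ((k : ℤ) - q) := by
  symm
  apply Finset.sum_bij (fun (k : ℕ) _ => (k : ℤ) - q)
  · intro k hk
    simp only [Finset.mem_range, Finset.mem_Icc] at *
    omega
  · intro a _ b _ h
    omega
  · intro j hj
    simp only [Finset.mem_range, Finset.mem_Icc] at *
    exact ⟨(j + q).toNat, by omega, by omega⟩
  · intro a _
    rfl

lemma MO.mg {m q : ℕ} (hm : m % 2 = 1) (h : MO m q) : Mg m (2 * q + 1) := by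
  obtain ⟨X, h1, h2, h3, h4⟩ := h
  have hb : ∀ j < 2 * q + 1, |((j : ℕ) : ℤ) - q| ≤ (q : ℤ) := by
    intro j hj
    rw [abs_le]; omega
  refine ⟨fun i j => 2 * X i ((j : ℤ) - q), ?_, ?_, ?_, ?_⟩
  · intro i hi
    rw [← Finset.mul_sum, ← sum_Icc_eq_range, h1 i hi]; rfl
  · intro j hj
    rw [← Finset.mul_sum, h2 _ (hb j hj)]; rfl
  · intro i hi j hj
    have := h3 i hi _ (hb j hj)
    constructor
    · rw [abs_mul]; push_cast; simpa using this
    · obtain ⟨p, rfl⟩ : ∃ p, m = 2 * p + 1 := ⟨m / 2, by omega⟩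
      push_cast
      rw [show ((2 : ℤ) * p + 1) * (2 * q + 1) = 2 * (2 * (p * q) + p + q) + 1 by ring]
      omega
  · intro i hi j hj i' hi' j' hj' h
    have := h4 i hi _ (hb j hj) i' hi' _ (hb j' hj') (by simpa using h)
    exact ⟨this.1, by omega⟩

lemma sum_Icc_succ (f : ℤ → ℤ) (q : ℕ) :
    ∑ j ∈ Finset.Icc (-((q + 1 : ℕ) : ℤ)) (q + 1 : ℕ), f j =
      (∑ j ∈ Finset.Icc (-(q : ℤ)) q, f j) + f (q + 1) + f (-(q + 1)) := by
  have : Finset.Icc (-((q + 1 : ℕ) : ℤ)) (q + 1 : ℕ) =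
      insert (-((q : ℤ) + 1)) (insert ((q : ℤ) + 1) (Finset.Icc (-(q : ℤ)) q)) := by
    ext x
    simp only [Finset.mem_insert, Finset.mem_Icc]
    omega
  rw [this, Finset.sum_insert, Finset.sum_insert]
  · ring
  · simp
  · simp only [Finset.mem_insert, Finset.mem_Icc]
    omega

lemma sum_outer (f : ℤ → ℤ) (q₀ r : ℕ)
    (h : ∀ u : ℤ, q₀ < u → (u - q₀) % 2 = 1 → f u + f (-u) + f (u + 1) + f (-(u + 1)) = 0) :
    ∑ j ∈ Finset.Icc (-((q₀ + 2 * r : ℕ) : ℤ)) (q₀ + 2 * r : ℕ), f j =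
      ∑ j ∈ Finset.Icc (-(q₀ : ℤ)) q₀, f j := by
  induction r with
  | zero => simp
  | succ r ih =>
    rw [show q₀ + 2 * (r + 1) = q₀ + 2 * r + 1 + 1 by ring, sum_Icc_succ, sum_Icc_succ, ih]
    have := h (q₀ + 2 * r + 1) (by omega) (by omega)
    push_cast
    linarith

lemma Icc2 : Finset.Icc (-((2 : ℕ) : ℤ)) (2 : ℕ) = {-2, -1, 0, 1, 2} := by decide
lemma Icc3 : Finset.Icc (-((3 : ℕ) : ℤ)) (3 : ℕ) = {-3, -2, -1, 0, 1, 2, 3} := by decide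

/-- A rectangle built from levels: the cell `(i, j)` holds `(2q+1) * L i j + T (L i j) j`. -/
lemma MO.of_levels (p q : ℕ) (L : ℕ → ℤ → ℤ) (T : ℤ → ℤ → ℤ)
    (hL : ∀ i < 2 * p + 1, ∀ j, |L i j| ≤ p)
    (hLi : ∀ i < 2 * p + 1, ∀ i' < 2 * p + 1, ∀ j, L i j = L i' j → i = i')
    (hT : ∀ l, |l| ≤ (p : ℤ) → ∀ j, |j| ≤ (q : ℤ) → |T l j| ≤ q)
    (hTi : ∀ l, |l| ≤ (p : ℤ) → ∀ j, |j| ≤ (q : ℤ) → ∀ j', |j'| ≤ (q : ℤ) → T l j = T l j' → j = j')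
    (hr : ∀ i < 2 * p + 1,
      ∑ j ∈ Finset.Icc (-(q : ℤ)) q, ((2 * q + 1) * L i j + T (L i j) j) = 0)
    (hc : ∀ j, |j| ≤ (q : ℤ) →
      ∑ i ∈ Finset.range (2 * p + 1), ((2 * q + 1) * L i j + T (L i j) j) = 0) :
    MO (2 * p + 1) q := by
  refine ⟨fun i j => (2 * q + 1) * L i j + T (L i j) j, hr, hc, ?_, ?_⟩
  · intro i hi j hj
    have h1 := hL i hi j
    have h2 := hT _ h1 j hj
    have : |(2 * q + 1) * L i j + T (L i j) j| ≤ (2 * q + 1) * p + q := by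
      refine (abs_add_le _ _).trans ?_
      rw [abs_mul, abs_of_nonneg (by positivity : (0 : ℤ) ≤ 2 * q + 1)]
      gcongr
    push_cast
    nlinarith
  · intro i hi j hj i' hi' j' hj' h
    simp only at h
    have h1 := hL i hi j
    have h2 := hT _ h1 j hj
    have h1' := hL i' hi' j'
    have h2' := hT _ h1' j' hj'
    rw [abs_le] at h2 h2'
    have hl : L i j = L i' j' := by
      rcases lt_trichotomy (L i j) (L i' j') with h3 | h3 | h3
      · nlinarith
      · exact h3
      · nlinarith
    rw [hl] at h
    have hjj := hTi _ h1' j hj j' hj' (by linarith)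
    subst hjj
    exact ⟨hLi i hi i' hi' j hl, rfl⟩

/-- The cyclic shift used in a triple of permutations with zero sum. -/
def bet (q : ℕ) (j : ℤ) : ℤ := if j ≤ 0 then j + q else j - q - 1

/-- Three permutations of `-q, …, q` with zero sum. -/
def T3 (q : ℕ) (l j : ℤ) : ℤ :=
  if l = 0 then j else if l = 1 then bet q j else -(j + bet q j)

/-- Pick by row. -/
def pick3 (i : ℕ) (a b c : ℤ) : ℤ := if i = 0 then a else if i = 1 then b else c

def L3e (i : ℕ) (j : ℤ) : ℤ :=
  if j = 0 then pick3 i (-1) 0 1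
  else if j = -1 then pick3 i 1 (-1) 0
  else if j % 2 = 0 then pick3 i 0 1 (-1)
  else pick3 i 0 (-1) 1

def L3o (i : ℕ) (j : ℤ) : ℤ :=
  if j = 0 then pick3 i 1 0 (-1)
  else if j = 1 then pick3 i (-1) 1 0
  else if j = -1 then pick3 i (-1) 0 1
  else if j = 2 then pick3 i 0 (-1) 1
  else if j = -2 then pick3 i 0 (-1) 1
  else if j = 3 then pick3 i 1 0 (-1)
  else if j = -3 then pick3 i 0 1 (-1)
  else if j % 2 = 0 then pick3 i 0 1 (-1)
  else pick3 i 0 (-1) 1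

lemma T3_bound (q : ℕ) (l : ℤ) (j : ℤ) (hj : |j| ≤ (q : ℤ)) : |T3 q l j| ≤ q := by
  rw [abs_le] at *
  simp only [T3, bet]
  split_ifs <;> omega

lemma T3_inj (q : ℕ) (l : ℤ) (j : ℤ) (hj : |j| ≤ (q : ℤ)) (j' : ℤ) (hj' : |j'| ≤ (q : ℤ))
    (h : T3 q l j = T3 q l j') : j = j' := by
  rw [abs_le] at *
  simp only [T3, bet] at h
  split_ifs at h <;> omega

/-- What a level function of a `3 × n` rectangle has to satisfy. -/
def Good3 (L : ℕ → ℤ → ℤ) : Prop := ∀ j,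
    (∀ i < 3, |L i j| ≤ 1) ∧ (∀ i < 3, ∀ i' < 3, L i j = L i' j → i = i')

lemma good_pick3 (a b c : ℤ) (ha : |a| ≤ 1) (hb : |b| ≤ 1) (hc : |c| ≤ 1) (hab : a ≠ b) (hac : a ≠ c)
    (hbc : b ≠ c) :
    (∀ i < 3, |pick3 i a b c| ≤ 1) ∧ (∀ i < 3, ∀ i' < 3, pick3 i a b c = pick3 i' a b c → i = i') := by
  constructor
  · intro i hi
    unfold pick3
    split_ifs <;> assumption
  · intro i hi i' hi' h
    unfold pick3 at h
    split_ifs at h <;> omega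

lemma MO.three_of (q : ℕ) (L : ℕ → ℤ → ℤ) (hL : Good3 L)
    (hs : ∀ j, L 0 j + L 1 j + L 2 j = 0)
    (hr : ∀ i < 3, ∑ j ∈ Finset.Icc (-(q : ℤ)) q, ((2 * q + 1) * L i j + T3 q (L i j) j) = 0) :
    MO 3 q := by
  refine MO.of_levels 1 q L (T3 q) (fun i hi j => (hL j).1 i hi)
    (fun i hi i' hi' j => (hL j).2 i hi i' hi') (fun l _ j hj => T3_bound q l j hj)
    (fun l _ j hj j' hj' h => T3_inj q l j hj j' hj' h) hr ?_
  intro j hj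
  have h0 := (hL j).1 0 (by norm_num)
  have h1 := (hL j).1 1 (by norm_num)
  have h2 := (hL j).1 2 (by norm_num)
  have h01 := (hL j).2 0 (by norm_num) 1 (by norm_num)
  have h02 := (hL j).2 0 (by norm_num) 2 (by norm_num)
  have h12 := (hL j).2 1 (by norm_num) 2 (by norm_num)
  have hs := hs j
  rw [abs_le] at *
  norm_num [Finset.sum_range_succ]
  have e : (2 * (q : ℤ) + 1) * L 0 j + (2 * (q : ℤ) + 1) * L 1 j + (2 * (q : ℤ) + 1) * L 2 j = 0 := by
    rw [← mul_add, ← mul_add, hs, mul_zero]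
  have : T3 q (L 0 j) j + T3 q (L 1 j) j + T3 q (L 2 j) j = 0 := by
    clear e hr
    simp only [T3]
    split_ifs <;> omega
  linarith

lemma L3e_good : Good3 L3e := by
  intro j
  unfold L3e
  split_ifs <;> exact good_pick3 _ _ _ (by norm_num) (by norm_num) (by norm_num)
    (by norm_num) (by norm_num) (by norm_num)

lemma L3o_good : Good3 L3o := by
  intro j
  unfold L3o
  split_ifs <;> exact good_pick3 _ _ _ (by norm_num) (by norm_num) (by norm_num)
    (by norm_num) (by norm_num) (by norm_num)

lemma MO.three_even (r : ℕ) : MO 3 (2 + 2 * r) := by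
  apply MO.three_of _ L3e L3e_good
  · intro j
    unfold L3e
    split_ifs <;> norm_num [pick3]
  · intro i hi
    rw [sum_outer _ 2 r]
    · rw [Icc2]
      interval_cases i <;> norm_num [L3e, pick3, T3, bet] <;> ring
    · intro u hu hu2
      have h1 : u % 2 = 1 := by omega
      have h2 : (u + 1) % 2 = 0 := by omega
      have h3 : (-u) % 2 = 1 := by omega
      have h4 : (-(u + 1)) % 2 = 0 := by omega
      have a1 : u ≠ 0 := by omega
      have a2 : u ≠ -1 := by omega
      have a3 : -u ≠ 0 := by omega
      have a4 : -u ≠ -1 := by omega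
      have a5 : u + 1 ≠ 0 := by omega
      have a6 : u + 1 ≠ -1 := by omega
      have a7 : -(u + 1) ≠ 0 := by omega
      have a8 : -(u + 1) ≠ -1 := by omega
      have b1 : ¬ u ≤ 0 := by omega
      have b2 : -u ≤ 0 := by omega
      have b3 : ¬ u + 1 ≤ 0 := by omega
      have b4 : -(u + 1) ≤ 0 := by omega
      simp only [L3e, h1, h2, h3, h4, if_neg a1, if_neg a2, if_neg a3, if_neg a4, if_neg a5,
        if_neg a6, if_neg a7, if_neg a8, T3, bet, if_neg b1, if_pos b2, if_neg b3, if_pos b4]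
      interval_cases i <;> norm_num [pick3] <;> ring

lemma MO.three_odd (r : ℕ) : MO 3 (3 + 2 * r) := by
  apply MO.three_of _ L3o L3o_good
  · intro j
    unfold L3o
    split_ifs <;> norm_num [pick3]
  · intro i hi
    rw [sum_outer _ 3 r]
    · rw [Icc3]
      interval_cases i <;> norm_num [L3o, pick3, T3, bet] <;> ring
    · intro u hu hu2
      have out : ∀ v : ℤ, 3 < |v| → L3o i v = if v % 2 = 0 then pick3 i 0 1 (-1) else pick3 i 0 (-1) 1 := by
        intro v hv
        have : v ≠ 0 ∧ v ≠ 1 ∧ v ≠ -1 ∧ v ≠ 2 ∧ v ≠ -2 ∧ v ≠ 3 ∧ v ≠ -3 := by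
          refine ⟨?_, ?_, ?_, ?_, ?_, ?_, ?_⟩ <;> rintro rfl <;> norm_num at hv
        obtain ⟨c1, c2, c3, c4, c5, c6, c7⟩ := this
        simp only [L3o, if_neg c1, if_neg c2, if_neg c3, if_neg c4, if_neg c5, if_neg c6, if_neg c7]
      have h1 : u % 2 = 0 := by omega
      have h2 : (u + 1) % 2 = 1 := by omega
      have h3 : (-u) % 2 = 0 := by omega
      have h4 : (-(u + 1)) % 2 = 1 := by omega
      have b1 : ¬ u ≤ 0 := by omega
      have b2 : -u ≤ 0 := by omega
      have b3 : ¬ u + 1 ≤ 0 := by omega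
      have b4 : -(u + 1) ≤ 0 := by omega
      rw [out u (by rw [abs_of_pos] <;> omega), out (-u) (by rw [abs_neg, abs_of_pos] <;> omega),
        out (u + 1) (by rw [abs_of_pos] <;> omega), out (-(u + 1)) (by rw [abs_neg, abs_of_pos] <;> omega)]
      simp only [h1, h2, h3, h4, T3, bet, if_neg b1, if_pos b2, if_neg b3, if_pos b4]
      interval_cases i <;> norm_num [pick3] <;> ring

set_option maxHeartbeats 4000000 in
lemma MO.three_one : MO 3 1 := by
  refine ⟨fun i j => if j = -1 then pick3 i 3 (-2) (-1) else if j = 0 then pick3 i (-4) 0 4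
    else pick3 i 1 2 (-3), ?_, ?_, ?_, ?_⟩
  · intro i hi
    rw [show Finset.Icc (-((1 : ℕ) : ℤ)) (1 : ℕ) = {-1, 0, 1} by decide]
    interval_cases i <;> norm_num [pick3]
  · intro j hj
    simp only [Finset.sum_range_succ, Finset.sum_range_zero]
    split_ifs <;> norm_num [pick3]
  · intro i hi j hj
    dsimp only
    split_ifs <;> interval_cases i <;> norm_num [pick3]
  · intro i hi j hj i' hi' j' hj' h
    rw [abs_le] at hj hj'
    simp only [pick3] at h
    split_ifs at h <;> omega

lemma MO.three (q : ℕ) (hq : 1 ≤ q) : MO 3 q := by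
  by_cases h1 : q = 1
  · subst h1; exact MO.three_one
  by_cases h2 : q % 2 = 0
  · have := MO.three_even ((q - 2) / 2)
    rwa [show 2 + 2 * ((q - 2) / 2) = q by omega] at this
  · have := MO.three_odd ((q - 3) / 2)
    rwa [show 3 + 2 * ((q - 3) / 2) = q by omega] at this

/-- Pick by row, row `0` being at level `0`. -/
def pick5 (i : ℕ) (a b c d : ℤ) : ℤ :=
  if i = 0 then 0 else if i = 1 then a else if i = 2 then b else if i = 3 then c else d

/-- Five permutations of `-q, …, q` with zero sum. -/
def T5 (b : ℤ → ℤ) (q : ℕ) (l j : ℤ) : ℤ :=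
  if |l| ≤ 1 then T3 q l j else if l = 2 then b j else -(b j)

def L5e (i : ℕ) (j : ℤ) : ℤ :=
  if j = -2 then pick5 i (1) (-2) (-1) (2)
  else if j = -1 then pick5 i (-1) (1) (2) (-2)
  else if j = 0 then pick5 i (1) (2) (-2) (-1)
  else if j = 1 then pick5 i (1) (-2) (-1) (2)
  else if j = 2 then pick5 i (-2) (1) (2) (-1)
  else if j % 2 = 0 then pick5 i (-1) (1) (2) (-2)
  else pick5 i (1) (-1) (-2) (2)

def L5o (i : ℕ) (j : ℤ) : ℤ :=
  if j = -3 then pick5 i (-1) (1) (2) (-2)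
  else if j = -2 then pick5 i (1) (-2) (-1) (2)
  else if j = -1 then pick5 i (1) (-1) (-2) (2)
  else if j = 0 then pick5 i (-2) (1) (2) (-1)
  else if j = 1 then pick5 i (1) (2) (-2) (-1)
  else if j = 2 then pick5 i (1) (-2) (-1) (2)
  else if j = 3 then pick5 i (-1) (1) (2) (-2)
  else if j % 2 = 0 then pick5 i (1) (-1) (-2) (2)
  else pick5 i (-1) (1) (2) (-2)

def b5e (j : ℤ) : ℤ :=
  if j = -2 then -1
  else if j = -1 then -2
  else if j = 0 then 1
  else if j = 1 then 2
  else if j = 2 then 0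
  else j

def b5o (j : ℤ) : ℤ :=
  if j = -3 then -2
  else if j = -2 then 0
  else if j = -1 then -3
  else if j = 0 then -1
  else if j = 1 then 2
  else if j = 2 then 3
  else if j = 3 then 1
  else j

/-- The four rows below the central one hold the levels `1, -1, 2, -2` in some order. -/
def Good5 (L : ℕ → ℤ → ℤ) : Prop := ∀ j,
    (∀ i < 5, |L i j| ≤ 2) ∧ (∀ i < 5, ∀ i' < 5, L i j = L i' j → i = i') ∧
    ∀ F : ℤ → ℤ, F 0 + F 1 + F (-1) + F 2 + F (-2) = 0 →
      F (L 0 j) + F (L 1 j) + F (L 2 j) + F (L 3 j) + F (L 4 j) = 0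

set_option maxHeartbeats 4000000 in
lemma good_pick5 (a b c d : ℤ) (ha : |a| ≤ 2) (hb : |b| ≤ 2) (hc : |c| ≤ 2) (hd : |d| ≤ 2)
    (hne : a ≠ b ∧ a ≠ c ∧ a ≠ d ∧ b ≠ c ∧ b ≠ d ∧ c ≠ d ∧ a ≠ 0 ∧ b ≠ 0 ∧ c ≠ 0 ∧ d ≠ 0)
    (hF : ∀ F : ℤ → ℤ, F 0 + F 1 + F (-1) + F 2 + F (-2) = 0 → F 0 + F a + F b + F c + F d = 0) :
    (∀ i < 5, |pick5 i a b c d| ≤ 2) ∧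
    (∀ i < 5, ∀ i' < 5, pick5 i a b c d = pick5 i' a b c d → i = i') ∧
    ∀ F : ℤ → ℤ, F 0 + F 1 + F (-1) + F 2 + F (-2) = 0 →
      F (pick5 0 a b c d) + F (pick5 1 a b c d) + F (pick5 2 a b c d) + F (pick5 3 a b c d)
        + F (pick5 4 a b c d) = 0 := by
  refine ⟨?_, ?_, ?_⟩
  · intro i hi
    unfold pick5
    split_ifs <;> first | assumption | norm_num
  · intro i hi i' hi' h
    unfold pick5 at h
    split_ifs at h <;> omega
  · intro F h
    simpa [pick5] using hF F h

set_option maxHeartbeats 4000000 in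
lemma L5e_good : Good5 L5e := by
  intro j
  unfold L5e
  split_ifs <;> exact good_pick5 _ _ _ _ (by norm_num) (by norm_num) (by norm_num)
    (by norm_num) (by norm_num) (fun F h => by linarith)

set_option maxHeartbeats 4000000 in
lemma L5o_good : Good5 L5o := by
  intro j
  unfold L5o
  split_ifs <;> exact good_pick5 _ _ _ _ (by norm_num) (by norm_num) (by norm_num)
    (by norm_num) (by norm_num) (fun F h => by linarith)

set_option maxHeartbeats 4000000 in
lemma MO.five_of (q : ℕ) (L : ℕ → ℤ → ℤ) (b : ℤ → ℤ) (hL : Good5 L)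
    (hb : ∀ j, |j| ≤ (q : ℤ) → |b j| ≤ q) (hbi : ∀ j j', b j = b j' → j = j')
    (hr : ∀ i < 5, ∑ j ∈ Finset.Icc (-(q : ℤ)) q, ((2 * q + 1) * L i j + T5 b q (L i j) j) = 0) :
    MO 5 q := by
  refine MO.of_levels 2 q L (T5 b q) (fun i hi j => (hL j).1 i hi)
    (fun i hi i' hi' j => (hL j).2.1 i hi i' hi') ?_ ?_ hr ?_
  · intro l _ j hj
    unfold T5
    split_ifs
    · exact T3_bound q l j hj
    · exact hb j hj
    · rw [abs_neg]; exact hb j hj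
  · intro l _ j hj j' hj' h
    unfold T5 at h
    split_ifs at h
    · exact T3_inj q l j hj j' hj' h
    · exact hbi _ _ h
    · exact hbi _ _ (by linarith)
  · intro j hj
    norm_num [Finset.sum_range_succ]
    apply (hL j).2.2 (fun l => (2 * q + 1) * l + T5 b q l j)
    norm_num [T5, T3]
    ring

set_option maxHeartbeats 4000000 in
lemma MO.five_even (r : ℕ) : MO 5 (2 + 2 * r) := by
  apply MO.five_of _ L5e b5e L5e_good
  · intro j hj
    rw [abs_le] at *
    unfold b5e
    split_ifs <;> omega
  · intro j j' h
    unfold b5e at h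
    split_ifs at h <;> omega
  · intro i hi
    rw [sum_outer _ 2 r]
    · rw [Icc2]
      interval_cases i <;> norm_num [L5e, pick5, T5, T3, bet, b5e] <;> ring
    · intro u hu hu2
      have ne : ∀ v : ℤ, 2 < |v| → v ≠ -2 ∧ v ≠ -1 ∧ v ≠ 0 ∧ v ≠ 1 ∧ v ≠ 2 := by
        intro v hv
        refine ⟨?_, ?_, ?_, ?_, ?_⟩ <;> rintro rfl <;> norm_num at hv
      have out : ∀ v : ℤ, 2 < |v| → L5e i v =
          if v % 2 = 0 then pick5 i (-1) 1 2 (-2) else pick5 i 1 (-1) (-2) 2 := by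
        intro v hv
        obtain ⟨c0, c1, c2, c3, c4⟩ := ne v hv
        simp only [L5e, if_neg c0, if_neg c1, if_neg c2, if_neg c3, if_neg c4]
      have outb : ∀ v : ℤ, 2 < |v| → b5e v = v := by
        intro v hv
        obtain ⟨c0, c1, c2, c3, c4⟩ := ne v hv
        simp only [b5e, if_neg c0, if_neg c1, if_neg c2, if_neg c3, if_neg c4]
      have h1 : u % 2 = 1 := by omega
      have h2 : (u + 1) % 2 = 0 := by omega
      have h3 : (-u) % 2 = 1 := by omega
      have h4 : (-(u + 1)) % 2 = 0 := by omega
      have b1 : ¬ u ≤ 0 := by omega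
      have b2 : -u ≤ 0 := by omega
      have b3 : ¬ u + 1 ≤ 0 := by omega
      have b4 : -(u + 1) ≤ 0 := by omega
      have g1 : 2 < |u| := by rw [abs_of_pos] <;> omega
      have g2 : 2 < |-u| := by rw [abs_neg, abs_of_pos] <;> omega
      have g3 : 2 < |u + 1| := by rw [abs_of_pos] <;> omega
      have g4 : 2 < |-(u + 1)| := by rw [abs_neg, abs_of_pos] <;> omega
      rw [out u g1, out (-u) g2, out (u + 1) g3, out (-(u + 1)) g4]
      simp only [h1, h2, h3, h4, T5, T3, bet, if_neg b1, if_pos b2, if_neg b3, if_pos b4,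
        outb _ g1, outb _ g2, outb _ g3, outb _ g4]
      interval_cases i <;> norm_num [pick5] <;> ring

set_option maxHeartbeats 4000000 in
lemma MO.five_odd (r : ℕ) : MO 5 (3 + 2 * r) := by
  apply MO.five_of _ L5o b5o L5o_good
  · intro j hj
    rw [abs_le] at *
    unfold b5o
    split_ifs <;> omega
  · intro j j' h
    unfold b5o at h
    split_ifs at h <;> omega
  · intro i hi
    rw [sum_outer _ 3 r]
    · rw [Icc3]
      interval_cases i <;> norm_num [L5o, pick5, T5, T3, bet, b5o] <;> ring
    · intro u hu hu2
      have ne : ∀ v : ℤ, 3 < |v| → v ≠ -3 ∧ v ≠ -2 ∧ v ≠ -1 ∧ v ≠ 0 ∧ v ≠ 1 ∧ v ≠ 2 ∧ v ≠ 3 := by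
        intro v hv
        refine ⟨?_, ?_, ?_, ?_, ?_, ?_, ?_⟩ <;> rintro rfl <;> norm_num at hv
      have out : ∀ v : ℤ, 3 < |v| → L5o i v =
          if v % 2 = 0 then pick5 i 1 (-1) (-2) 2 else pick5 i (-1) 1 2 (-2) := by
        intro v hv
        obtain ⟨c0, c1, c2, c3, c4, c5, c6⟩ := ne v hv
        simp only [L5o, if_neg c0, if_neg c1, if_neg c2, if_neg c3, if_neg c4, if_neg c5, if_neg c6]
      have outb : ∀ v : ℤ, 3 < |v| → b5o v = v := by
        intro v hv
        obtain ⟨c0, c1, c2, c3, c4, c5, c6⟩ := ne v hv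
        simp only [b5o, if_neg c0, if_neg c1, if_neg c2, if_neg c3, if_neg c4, if_neg c5, if_neg c6]
      have h1 : u % 2 = 0 := by omega
      have h2 : (u + 1) % 2 = 1 := by omega
      have h3 : (-u) % 2 = 0 := by omega
      have h4 : (-(u + 1)) % 2 = 1 := by omega
      have b1 : ¬ u ≤ 0 := by omega
      have b2 : -u ≤ 0 := by omega
      have b3 : ¬ u + 1 ≤ 0 := by omega
      have b4 : -(u + 1) ≤ 0 := by omega
      have g1 : 3 < |u| := by rw [abs_of_pos] <;> omega
      have g2 : 3 < |-u| := by rw [abs_neg, abs_of_pos] <;> omega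
      have g3 : 3 < |u + 1| := by rw [abs_of_pos] <;> omega
      have g4 : 3 < |-(u + 1)| := by rw [abs_neg, abs_of_pos] <;> omega
      rw [out u g1, out (-u) g2, out (u + 1) g3, out (-(u + 1)) g4]
      simp only [h1, h2, h3, h4, T5, T3, bet, if_neg b1, if_pos b2, if_neg b3, if_pos b4,
        outb _ g1, outb _ g2, outb _ g3, outb _ g4]
      interval_cases i <;> norm_num [pick5] <;> ring

lemma MO.five (q : ℕ) (hq : 2 ≤ q) : MO 5 q := by
  by_cases h2 : q % 2 = 0
  · have := MO.five_even ((q - 2) / 2)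
    rwa [show 2 + 2 * ((q - 2) / 2) = q by omega] at this
  · have := MO.five_odd ((q - 3) / 2)
    rwa [show 3 + 2 * ((q - 3) / 2) = q by omega] at this


/-- Signs for an odd half-width. -/
def sgo (j : ℤ) : ℤ := if j = 0 then 0 else if j = 1 ∨ j = 2 ∨ j = -3 then 1 else
  if j = -1 ∨ j = -2 ∨ j = 3 then -1 else if j % 2 = 0 then 1 else -1

lemma exists_sign (q : ℕ) (hq : 2 ≤ q) : ∃ s : ℤ → ℤ, s 0 = 0 ∧ (∀ j, j ≠ 0 → s j = 1 ∨ s j = -1) ∧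
    ∑ j ∈ Finset.Icc (-(q : ℤ)) q, s j = 0 ∧ ∑ j ∈ Finset.Icc (-(q : ℤ)) q, s j * j = 0 := by
  by_cases h2 : q % 2 = 0
  · obtain ⟨r, rfl⟩ : ∃ r, q = 0 + 2 * r := ⟨q / 2, by omega⟩
    refine ⟨fun j => if j = 0 then 0 else if j % 2 = 0 then 1 else -1, by simp, ?_, ?_, ?_⟩
    · intro j hj
      dsimp only
      rw [if_neg hj]
      split_ifs <;> simp
    · rw [sum_outer]
      · simp
      · intro u hu hu2
        split_ifs <;> omega
    · rw [sum_outer]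
      · simp
      · intro u hu hu2
        beta_reduce
        split_ifs <;> omega
  · obtain ⟨r, rfl⟩ : ∃ r, q = 3 + 2 * r := ⟨(q - 3) / 2, by omega⟩
    have out : ∀ v : ℤ, 3 < |v| → sgo v = if v % 2 = 0 then 1 else -1 := by
      intro v hv
      unfold sgo
      have : v ≠ -3 ∧ v ≠ -2 ∧ v ≠ -1 ∧ v ≠ 0 ∧ v ≠ 1 ∧ v ≠ 2 ∧ v ≠ 3 := by
        refine ⟨?_, ?_, ?_, ?_, ?_, ?_, ?_⟩ <;> rintro rfl <;> norm_num at hv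
      rw [if_neg (by omega), if_neg (by omega), if_neg (by omega)]
    have out4 : ∀ u : ℤ, 3 < u → (u - 3) % 2 = 1 →
        sgo u = 1 ∧ sgo (-u) = 1 ∧ sgo (u + 1) = -1 ∧ sgo (-(u + 1)) = -1 := by
      intro u hu hu2
      have g1 : 3 < |u| := by rw [abs_of_pos] <;> omega
      have g2 : 3 < |-u| := by rw [abs_neg, abs_of_pos] <;> omega
      have g3 : 3 < |u + 1| := by rw [abs_of_pos] <;> omega
      have g4 : 3 < |-(u + 1)| := by rw [abs_neg, abs_of_pos] <;> omega
      refine ⟨?_, ?_, ?_, ?_⟩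
      · rw [out _ g1, if_pos (by omega)]
      · rw [out _ g2, if_pos (by omega)]
      · rw [out _ g3, if_neg (by omega)]
      · rw [out _ g4, if_neg (by omega)]
    refine ⟨sgo, by simp [sgo], ?_, ?_, ?_⟩
    · intro j hj
      unfold sgo
      rw [if_neg hj]
      split_ifs <;> simp
    · rw [sum_outer]
      · rw [Icc3]
        norm_num [sgo]
      · intro u hu hu2
        obtain ⟨a1, a2, a3, a4⟩ := out4 u hu hu2
        rw [a1, a2, a3, a4]; norm_num
    · rw [sum_outer]
      · rw [Icc3]
        norm_num [sgo]
      · intro u hu hu2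
        obtain ⟨a1, a2, a3, a4⟩ := out4 u hu hu2
        rw [a1, a2, a3, a4]; ring

/-- Four new levels for the extension step. -/
def L4 (s iA iD : ℤ → ℤ) (a : ℤ) (r : ℕ) (j : ℤ) : ℤ :=
  if r = 0 then s j * a + (if j = 0 then a else 0) - iD j
  else if r = 1 then - (s j * a) - iA j + (if j = 0 then a + 1 else 0)
  else if r = 2 then - (s j * (a + 1)) + iA j - (if j = 0 then a + 1 else 0)
  else s j * (a + 1) + iD j - (if j = 0 then a else 0)

/-- The slope attached to the new levels. -/
def S4 (s : ℤ → ℤ) (r : ℕ) (j : ℤ) : ℤ :=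
  if r = 0 then s j else if r = 1 then - s j else if r = 2 then - s j else s j

lemma L4_spec (s iA iD : ℤ → ℤ) (a : ℤ) (ha : 1 ≤ a) (hs0 : s 0 = 0)
    (hs : ∀ j, j ≠ 0 → s j = 1 ∨ s j = -1)
    (hA : ∀ j, (iA j = 0) ∨ (iA j = 1 ∧ s j = 1)) (hD : ∀ j, (iD j = 0) ∨ (iD j = 1 ∧ s j = -1))
    (j : ℤ) :
    (∀ r < 4, a ≤ |L4 s iA iD a r j| ∧ |L4 s iA iD a r j| ≤ a + 1 ∧
      S4 s r j * j = if 0 < L4 s iA iD a r j then j else -j) ∧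
    ∀ r < 4, ∀ r' < 4, L4 s iA iD a r j = L4 s iA iD a r' j → r = r' := by
  have key : ∀ x y : ℤ, (x = y ∨ x = y + 1 ∨ x = -y ∨ x = -(y+1)) → 1 ≤ y → y ≤ |x| ∧ |x| ≤ y + 1 := by
    intro x y h hy
    rcases h with rfl | rfl | rfl | rfl
    · rw [abs_of_pos] <;> omega
    · rw [abs_of_pos] <;> omega
    · rw [abs_neg, abs_of_pos] <;> omega
    · rw [abs_neg, abs_of_pos] <;> omega
  by_cases hj : j = 0
  · subst hj
    have hA0 : iA 0 = 0 := by rcases hA 0 with h | h; exact h; omega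
    have hD0 : iD 0 = 0 := by rcases hD 0 with h | h; exact h; omega
    constructor
    · intro r hr
      refine ⟨(key _ _ ?_ ha).1, (key _ _ ?_ ha).2, by simp⟩ <;>
      · unfold L4
        rw [hs0, hA0, hD0]
        split_ifs <;> simp_all
    · intro r hr r' hr' h
      unfold L4 at h
      rw [hs0, hA0, hD0] at h
      simp only [if_true] at h
      split_ifs at h <;> omega
  · rcases hs j hj with h1 | h1
    · have hD0 : iD j = 0 := by rcases hD j with h | h; exact h; omega
      have hA0 : iA j = 0 ∨ iA j = 1 := by rcases hA j with h | h; exact Or.inl h; exact Or.inr h.1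
      constructor
      · intro r hr
        have hh : L4 s iA iD a r j = if r = 0 then a else if r = 1 then -a - iA j else
            if r = 2 then -(a + 1) + iA j else a + 1 := by
          unfold L4
          rw [h1, hD0]
          simp [hj]
        rw [hh]
        refine ⟨(key _ _ ?_ ha).1, (key _ _ ?_ ha).2, ?_⟩
        · split_ifs <;> omega
        · split_ifs <;> omega
        · unfold S4
          rw [h1]
          split_ifs <;> omega
      · intro r hr r' hr' h
        unfold L4 at h
        rw [h1, hD0] at h
        simp only [if_neg hj] at h
        split_ifs at h <;> omega
    · have hA0 : iA j = 0 := by rcases hA j with h | h; exact h; omega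
      have hD0 : iD j = 0 ∨ iD j = 1 := by rcases hD j with h | h; exact Or.inl h; exact Or.inr h.1
      constructor
      · intro r hr
        have hh : L4 s iA iD a r j = if r = 0 then -a - iD j else if r = 1 then a else
            if r = 2 then a + 1 else -(a + 1) + iD j := by
          unfold L4
          rw [h1, hA0]
          simp [hj]
        rw [hh]
        refine ⟨(key _ _ ?_ ha).1, (key _ _ ?_ ha).2, ?_⟩
        · split_ifs <;> omega
        · split_ifs <;> omega
        · unfold S4
          rw [h1]
          split_ifs <;> omega
      · intro r hr r' hr' h
        unfold L4 at h
        rw [h1, hA0] at h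
        simp only [if_neg hj] at h
        split_ifs at h <;> omega

/-- Indicators needed for the extension step. -/
lemma exists_ind (q a : ℕ) (haq : a + 1 ≤ q) (s : ℤ → ℤ) (hs0 : s 0 = 0)
    (hs : ∀ j, j ≠ 0 → s j = 1 ∨ s j = -1) (hsum : ∑ j ∈ Finset.Icc (-(q : ℤ)) q, s j = 0) :
    ∃ iA iD : ℤ → ℤ, (∀ j, (iA j = 0) ∨ (iA j = 1 ∧ s j = 1)) ∧
      (∀ j, (iD j = 0) ∨ (iD j = 1 ∧ s j = -1)) ∧
      ∑ j ∈ Finset.Icc (-(q : ℤ)) q, iA j = a + 1 ∧ ∑ j ∈ Finset.Icc (-(q : ℤ)) q, iD j = a := by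
  set I := Finset.Icc (-(q : ℤ)) q with hI
  have hcard : I.card = 2 * q + 1 := by rw [hI, Int.card_Icc]; omega
  have e1 : ((I.filter (fun j => s j = 1)).card : ℤ) = ∑ j ∈ I, if s j = 1 then 1 else 0 := by simp
  have e2 : ((I.filter (fun j => s j = -1)).card : ℤ) = ∑ j ∈ I, if s j = -1 then 1 else 0 := by simp
  have e3 : ∑ j ∈ I, (if j = 0 then (1 : ℤ) else 0) = 1 := by
    rw [Finset.sum_ite_eq' I 0]
    simp [hI]
  have e4 : ((I.filter (fun j => s j = 1)).card : ℤ) - (I.filter (fun j => s j = -1)).card = 0 := by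
    rw [e1, e2, ← Finset.sum_sub_distrib]
    refine Eq.trans ?_ hsum
    refine Finset.sum_congr rfl fun j _ => ?_
    by_cases hj : j = 0
    · subst hj; simp [hs0]
    · rcases hs j hj with h | h <;> simp [h]
  have e5 : ((I.filter (fun j => s j = 1)).card : ℤ) + (I.filter (fun j => s j = -1)).card + 1
      = 2 * q + 1 := by
    have : ((I.card : ℕ) : ℤ) = ∑ j ∈ I, 1 := by simp
    rw [hcard] at this
    push_cast at this
    rw [this, e1, e2]
    refine (congrArg _ e3.symm).trans ?_
    rw [← Finset.sum_add_distrib, ← Finset.sum_add_distrib]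
    refine Finset.sum_congr rfl fun j _ => ?_
    by_cases hj : j = 0
    · subst hj; simp [hs0]
    · rcases hs j hj with h | h <;> simp [h, hj]
  obtain ⟨A, hA, hAc⟩ := Finset.exists_subset_card_eq
    (show a + 1 ≤ (I.filter (fun j => s j = 1)).card by omega)
  obtain ⟨D, hD, hDc⟩ := Finset.exists_subset_card_eq
    (show a ≤ (I.filter (fun j => s j = -1)).card by omega)
  have cnt : ∀ B : Finset ℤ, B ⊆ I → ∑ j ∈ I, (if j ∈ B then (1 : ℤ) else 0) = B.card := by
    intro B hB
    rw [← Finset.sum_filter, Finset.filter_mem_eq_inter, Finset.inter_eq_right.2 hB]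
    simp
  refine ⟨fun j => if j ∈ A then 1 else 0, fun j => if j ∈ D then 1 else 0, ?_, ?_, ?_, ?_⟩
  · intro j
    by_cases h : j ∈ A
    · right; simpa [h] using (Finset.mem_filter.1 (hA h)).2
    · left; simp [h]
  · intro j
    by_cases h : j ∈ D
    · right; simpa [h] using (Finset.mem_filter.1 (hD h)).2
    · left; simp [h]
  · rw [cnt A (hA.trans (Finset.filter_subset _ _)), hAc]; push_cast; rfl
  · rw [cnt D (hD.trans (Finset.filter_subset _ _)), hDc]

set_option maxHeartbeats 2000000 in
lemma MO.ext {c q : ℕ} (hq : c + 2 ≤ q) (h : MO (2 * c + 1) q) : MO (2 * c + 5) q := by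
  obtain ⟨X, h1, h2, h3, h4⟩ := h
  obtain ⟨s, hs0, hs, hsum, hsum2⟩ := exists_sign q (by omega)
  obtain ⟨iA, iD, hA, hD, hAs, hDs⟩ := exists_ind q (c + 1) (by omega) s hs0 hs hsum
  set a : ℤ := (c : ℤ) + 1 with ha
  have ha1 : 1 ≤ a := by omega
  push_cast at hAs hDs
  have spec := L4_spec s iA iD a ha1 hs0 hs hA hD
  set Y : ℕ → ℤ → ℤ := fun r j => (2 * q + 1) * L4 s iA iD a r j + S4 s r j * j with hY
  set Z : ℕ → ℤ → ℤ := fun i j => if i < 2 * c + 1 then X i j else Y (i - (2 * c + 1)) j with hZ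
  have hZ1 : ∀ i < 2 * c + 1, ∀ j, Z i j = X i j := fun i hi j => if_pos hi
  have hZ2 : ∀ r j, Z (2 * c + 1 + r) j = Y r j := by
    intro r j
    have : ¬ 2 * c + 1 + r < 2 * c + 1 := by omega
    rw [hZ]
    simp only [if_neg this, Nat.add_sub_cancel_left]
  have hcase : ∀ i < 2 * c + 5, i < 2 * c + 1 ∨ ∃ r < 4, i = 2 * c + 1 + r := by
    intro i hi
    by_cases h : i < 2 * c + 1
    · exact Or.inl h
    · exact Or.inr ⟨i - (2 * c + 1), by omega, by omega⟩
  have hSb : ∀ r < 4, ∀ j, |j| ≤ (q : ℤ) → |S4 s r j * j| ≤ q := by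
    intro r hr j hj
    rw [((spec j).1 r hr).2.2]
    split_ifs
    · exact hj
    · rwa [abs_neg]
  have hYlo : ∀ r < 4, ∀ j, |j| ≤ (q : ℤ) → (2 * a - 1) * (2 * q + 1) < 2 * |Y r j| := by
    intro r hr j hj
    have b1 := ((spec j).1 r hr).1
    have b2 := hSb r hr j hj
    have : |(2 * q + 1) * L4 s iA iD a r j| - |S4 s r j * j| ≤ |Y r j| := by
      have := abs_sub_abs_le_abs_sub ((2 * q + 1) * L4 s iA iD a r j) (-(S4 s r j * j))
      rwa [abs_neg, sub_neg_eq_add] at this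
    rw [abs_mul, abs_of_nonneg (by positivity : (0 : ℤ) ≤ 2 * q + 1)] at this
    nlinarith
  have hYhi : ∀ r < 4, ∀ j, |j| ≤ (q : ℤ) → 2 * |Y r j| < (2 * a + 3) * (2 * q + 1) := by
    intro r hr j hj
    have b1 := ((spec j).1 r hr).2.1
    have b2 := hSb r hr j hj
    have := abs_add_le ((2 * q + 1) * L4 s iA iD a r j) (S4 s r j * j)
    rw [abs_mul, abs_of_nonneg (by positivity : (0 : ℤ) ≤ 2 * q + 1)] at this
    change |Y r j| ≤ _ at this
    nlinarith
  have hz : ∀ x : ℤ, ∑ j ∈ Finset.Icc (-(q : ℤ)) q, (if j = 0 then x else 0) = x := by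
    intro x
    rw [Finset.sum_ite_eq' _ 0]
    simp
  refine ⟨Z, ?_, ?_, ?_, ?_⟩
  · intro i hi
    rcases hcase i hi with h | ⟨r, hr, rfl⟩
    · simp only [hZ1 i h]; exact h1 i h
    · simp only [hZ2, hY]
      rw [Finset.sum_add_distrib, ← Finset.mul_sum]
      have hS : ∑ j ∈ Finset.Icc (-(q : ℤ)) q, S4 s r j * j = 0 := by
        unfold S4
        split_ifs
        · exact hsum2
        · simp only [neg_mul, Finset.sum_neg_distrib, hsum2, neg_zero]
        · simp only [neg_mul, Finset.sum_neg_distrib, hsum2, neg_zero]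
        · exact hsum2
      have hL : ∑ j ∈ Finset.Icc (-(q : ℤ)) q, L4 s iA iD a r j = 0 := by
        unfold L4
        split_ifs <;> simp only [Finset.sum_add_distrib, Finset.sum_sub_distrib,
          Finset.sum_neg_distrib, ← Finset.sum_mul, hsum, hAs, hDs, hz] <;> ring
      rw [hS, hL]; ring
  · intro j hj
    rw [show 2 * c + 5 = 2 * c + 1 + 4 by ring, Finset.sum_range_add,
      Finset.sum_congr rfl (fun i hi => hZ1 i (Finset.mem_range.1 hi) j), h2 j hj]
    simp only [hZ2, hY, Finset.sum_range_succ, Finset.sum_range_zero, L4, S4]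
    norm_num
    split_ifs <;> ring
  · intro i hi j hj
    rcases hcase i hi with h | ⟨r, hr, rfl⟩
    · rw [hZ1 i h]
      have := h3 i h j hj
      push_cast at this ⊢
      nlinarith
    · rw [hZ2]
      have := hYhi r hr j hj
      rw [ha] at this
      push_cast
      linarith
  · have key : ∀ i < 2 * c + 1, ∀ j, |j| ≤ (q : ℤ) → ∀ r < 4, ∀ j', |j'| ≤ (q : ℤ) → X i j ≠ Y r j' := by
      intro i hi j hj r hr j' hj' h
      have b1 := h3 i hi j hj
      have b2 := hYlo r hr j' hj'
      rw [← h, ha] at b2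
      push_cast at b1
      linarith
    intro i hi j hj i' hi' j' hj' h
    rcases hcase i hi with h' | ⟨r, hr, rfl⟩ <;> rcases hcase i' hi' with h'' | ⟨r', hr', rfl⟩
    · rw [hZ1 i h', hZ1 i' h''] at h
      exact h4 i h' j hj i' h'' j' hj' h
    · rw [hZ1 i h', hZ2] at h
      exact absurd h (key _ h' _ hj _ hr' _ hj')
    · rw [hZ1 i' h'', hZ2] at h
      exact absurd h.symm (key _ h'' _ hj' _ hr _ hj)
    · rw [hZ2, hZ2] at h
      simp only [hY] at h
      have b := hSb r hr j hj
      have b' := hSb r' hr' j' hj'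
      rw [abs_le] at b b'
      have hl : L4 s iA iD a r j = L4 s iA iD a r' j' := by
        rcases lt_trichotomy (L4 s iA iD a r j) (L4 s iA iD a r' j') with h3 | h3 | h3
        · nlinarith
        · exact h3
        · nlinarith
      rw [hl, ((spec j).1 r hr).2.2, ((spec j').1 r' hr').2.2, hl] at h
      have hjj : j = j' := by
        split_ifs at h <;> linarith
      subst hjj
      have := (spec j).2 r hr r' hr' hl
      exact ⟨by omega, rfl⟩

lemma MO.odd (c : ℕ) : ∀ q, c + 1 ≤ q → MO (2 * c + 3) q := by
  induction c using Nat.strong_induction_on with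
  | _ c ih =>
    intro q hq
    match c with
    | 0 => exact MO.three q hq
    | 1 => exact MO.five q hq
    | c + 2 =>
      have := ih c (by omega) q (by omega)
      exact MO.ext (c := c + 1) (by omega) this

lemma Mg.exists {m n : ℕ} (hm : 3 ≤ m) (hn : 2 ≤ n) (hpar : m % 2 = n % 2) : Mg m n := by
  by_cases h : m % 2 = 0
  · exact Mg.even hm hn h (by omega)
  · have aux : ∀ m n : ℕ, 3 ≤ m → m ≤ n → m % 2 = 1 → n % 2 = 1 → Mg m n := by
      intro m n h3 hmn hm1 hn1
      have := MO.mg (by omega) (MO.odd ((m - 3) / 2) (n / 2) (by omega))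
      rwa [show 2 * ((m - 3) / 2) + 3 = m by omega, show 2 * (n / 2) + 1 = n by omega] at this
    rcases le_total m n with h' | h'
    · exact aux m n hm h' (by omega) (by omega)
    · exact (aux n m (by omega) h' (by omega) (by omega)).symm


lemma exists_lab {V : Type*} [Fintype V] {m n : ℕ} (hm : Fintype.card V = m) (h : Mg m n) :
    ∃ lab : V → Fin n → ℕ, (∀ a b, 1 ≤ lab a b ∧ lab a b ≤ m * n) ∧
      (∀ a b a' b', lab a b = lab a' b' → a = a' ∧ b = b') ∧
      (∀ k, 1 ≤ k → k ≤ m * n → ∃ a b, lab a b = k) ∧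
      (∀ a, 2 * ∑ b, lab a b = n * (m * n + 1)) ∧ (∀ b, 2 * ∑ a, lab a b = m * (m * n + 1)) := by
  obtain ⟨X, h1, h2, h3, h4⟩ := h
  let σ : V ≃ Fin m := Fintype.equivFinOfCardEq hm
  set lab : V → Fin n → ℕ := fun a b => ((X (σ a) b + (m : ℤ) * n + 1) / 2).toNat with hlab
  have key : ∀ a b, 2 * (lab a b : ℤ) = X (σ a) b + (m : ℤ) * n + 1 := by
    intro a b
    obtain ⟨b1, b2⟩ := h3 (σ a) (σ a).2 b b.2
    rw [abs_lt] at b1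
    simp only [hlab]
    omega
  have bd : ∀ a b, 1 ≤ lab a b ∧ lab a b ≤ m * n := by
    intro a b
    obtain ⟨b1, b2⟩ := h3 (σ a) (σ a).2 b b.2
    rw [abs_lt] at b1
    have := key a b
    constructor
    · omega
    · zify; omega
  have inj : ∀ a b a' b', lab a b = lab a' b' → a = a' ∧ b = b' := by
    intro a b a' b' h
    have k1 := key a b
    rw [h, key a' b'] at k1
    obtain ⟨c1, c2⟩ := h4 (σ a) (σ a).2 b b.2 (σ a') (σ a').2 b' b'.2 (by linarith)
    exact ⟨σ.injective (Fin.ext c1), Fin.ext c2⟩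
  refine ⟨lab, bd, inj, ?_, ?_, ?_⟩
  · have hi : Function.Injective (fun p : V × Fin n => lab p.1 p.2) := by
      intro p p' h
      obtain ⟨c1, c2⟩ := inj _ _ _ _ h
      exact Prod.ext c1 c2
    have heq : Finset.univ.image (fun p : V × Fin n => lab p.1 p.2) = Finset.Icc 1 (m * n) := by
      apply Finset.eq_of_subset_of_card_le
      · intro k hk
        obtain ⟨p, _, rfl⟩ := Finset.mem_image.1 hk
        exact Finset.mem_Icc.2 (bd _ _)
      · rw [Finset.card_image_of_injective _ hi]
        simp [hm]
    intro k hk1 hk2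
    have : k ∈ Finset.univ.image (fun p : V × Fin n => lab p.1 p.2) := by
      rw [heq]; exact Finset.mem_Icc.2 ⟨hk1, hk2⟩
    obtain ⟨p, _, hp⟩ := Finset.mem_image.1 this
    exact ⟨p.1, p.2, hp⟩
  · intro a
    zify
    rw [Finset.mul_sum]
    simp only [key]
    have := h1 (σ a) (σ a).2
    rw [← Fin.sum_univ_eq_sum_range (fun j => X (σ a) j)] at this
    rw [Finset.sum_add_distrib, Finset.sum_add_distrib, this]
    simp
    ring
  · intro b
    zify
    rw [Finset.mul_sum]
    simp only [key]
    have := h2 b b.2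
    rw [← Fin.sum_univ_eq_sum_range (fun i => X i b)] at this
    rw [Finset.sum_add_distrib, Finset.sum_add_distrib, Equiv.sum_comp σ (fun i => X i b), this]
    simp [hm]
    ring

lemma vertexWeight_eq {V : Type*} [Fintype V] (G : SimpleGraph V) (f : Sym2 V → ℕ) (x : V) :
    vertexWeight G f x = ∑ y, if G.Adj x y then f s(x, y) else 0 := by
  unfold vertexWeight
  rw [← Finset.sum_filter]
  symm
  apply Finset.sum_bij (fun y _ => s(x, y))
  · intro y hy
    simp only [Finset.mem_filter, Finset.mem_univ, true_and] at hy
    simp [hy]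
  · intro a _ b _ h
    exact Sym2.congr_right.1 h
  · intro p hp
    simp only [Finset.mem_filter, SimpleGraph.mem_edgeFinset] at hp
    obtain ⟨hp1, y, rfl⟩ := hp
    exact ⟨y, by simpa using hp1, rfl⟩
  · intro _ _; rfl

section
variable {V : Type*} {n : ℕ} (G : SimpleGraph V)

lemma join_ll (a b : V) : (joinG G (⊥ : SimpleGraph (Fin n))).Adj (Sum.inl a) (Sum.inl b) ↔ G.Adj a b := by
  simp only [joinG, SimpleGraph.fromRel_adj]
  constructor
  · rintro ⟨_, h⟩
    simpa [G.adj_comm b a] using h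
  · intro h
    refine ⟨by simpa using h.ne, ?_⟩
    simp [h]

lemma join_lr (a : V) (b : Fin n) : (joinG G (⊥ : SimpleGraph (Fin n))).Adj (Sum.inl a) (Sum.inr b) := by
  simp [joinG, SimpleGraph.fromRel_adj]

lemma join_rl (a : V) (b : Fin n) : (joinG G (⊥ : SimpleGraph (Fin n))).Adj (Sum.inr b) (Sum.inl a) :=
  (join_lr G a b).symm

lemma join_rr (a b : Fin n) : ¬ (joinG G (⊥ : SimpleGraph (Fin n))).Adj (Sum.inr a) (Sum.inr b) := by
  simp [joinG, SimpleGraph.fromRel_adj]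

end

/-- The labelling of the join on ordered pairs. -/
def joinFun {V : Type*} {n : ℕ} (f : Sym2 V → ℕ) (e : ℕ) (lab : V → Fin n → ℕ) :
    V ⊕ Fin n → V ⊕ Fin n → ℕ
  | Sum.inl a, Sum.inl b => f s(a, b)
  | Sum.inl a, Sum.inr b => e + lab a b
  | Sum.inr b, Sum.inl a => e + lab a b
  | Sum.inr _, Sum.inr _ => 0

/-- The labelling of the join. -/
def joinLab {V : Type*} {n : ℕ} (f : Sym2 V → ℕ) (e : ℕ) (lab : V → Fin n → ℕ) :
    Sym2 (V ⊕ Fin n) → ℕ :=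
  Sym2.lift ⟨joinFun f e lab, by
    rintro (a | a) (b | b)
    · simp [joinFun, Sym2.eq_swap]
    · rfl
    · rfl
    · rfl⟩

lemma joinLab_mk {V : Type*} {n : ℕ} (f : Sym2 V → ℕ) (e : ℕ) (lab : V → Fin n → ℕ)
    (x y : V ⊕ Fin n) : joinLab f e lab s(x, y) = joinFun f e lab x y := rfl

lemma join_edge {V : Type*} {n : ℕ} (G : SimpleGraph V) (p : Sym2 (V ⊕ Fin n))
    (hp : p ∈ (joinG G (⊥ : SimpleGraph (Fin n))).edgeSet) :
    (∃ q ∈ G.edgeSet, p = Sym2.map Sum.inl q) ∨ ∃ a b, p = s(Sum.inl a, Sum.inr b) := by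
  induction p using Sym2.ind with
  | _ x y =>
    rw [SimpleGraph.mem_edgeSet] at hp
    rcases x with a | a <;> rcases y with b | b
    · left
      exact ⟨s(a, b), (join_ll G a b).1 hp, rfl⟩
    · right; exact ⟨a, b, rfl⟩
    · right; exact ⟨b, a, Sym2.eq_swap⟩
    · exact absurd hp (join_rr G a b)

lemma joinLab_map {V : Type*} {n : ℕ} (f : Sym2 V → ℕ) (e : ℕ) (lab : V → Fin n → ℕ)
    (q : Sym2 V) : joinLab f e lab (Sym2.map Sum.inl q) = f q := by
  induction q using Sym2.ind with
  | _ x y => rfl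

lemma joinLab_bij {V : Type*} [Fintype V] {m n e : ℕ} (G : SimpleGraph V) (f : Sym2 V → ℕ)
    (hf : Set.BijOn f G.edgeSet (Set.Icc 1 e)) (lab : V → Fin n → ℕ)
    (h1 : ∀ a b, 1 ≤ lab a b ∧ lab a b ≤ m * n)
    (h2 : ∀ a b a' b', lab a b = lab a' b' → a = a' ∧ b = b')
    (h3 : ∀ k, 1 ≤ k → k ≤ m * n → ∃ a b, lab a b = k) :
    Set.BijOn (joinLab f e lab) (joinG G (⊥ : SimpleGraph (Fin n))).edgeSet
      (Set.Icc 1 (e + m * n)) := by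
  obtain ⟨f1, f2, f3⟩ := hf
  refine ⟨?_, ?_, ?_⟩
  · intro p hp
    rcases join_edge G p hp with ⟨q, hq, rfl⟩ | ⟨a, b, rfl⟩
    · rw [joinLab_map]
      have := f1 hq
      rw [Set.mem_Icc] at *
      omega
    · rw [joinLab_mk]
      have := h1 a b
      rw [Set.mem_Icc]
      change 1 ≤ e + lab a b ∧ e + lab a b ≤ _
      omega
  · intro p hp p' hp' h
    rcases join_edge G p hp with ⟨q, hq, rfl⟩ | ⟨a, b, rfl⟩ <;>
      rcases join_edge G p' hp' with ⟨q', hq', rfl⟩ | ⟨a', b', rfl⟩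
    · rw [joinLab_map, joinLab_map] at h
      rw [f2 hq hq' h]
    · rw [joinLab_map, joinLab_mk] at h
      change _ = e + lab a' b' at h
      have c1 := f1 hq
      have c2 := h1 a' b'
      rw [Set.mem_Icc] at c1
      omega
    · rw [joinLab_map, joinLab_mk] at h
      change e + lab a b = _ at h
      have c1 := f1 hq'
      have c2 := h1 a b
      rw [Set.mem_Icc] at c1
      omega
    · rw [joinLab_mk, joinLab_mk] at h
      change e + lab a b = e + lab a' b' at h
      obtain ⟨rfl, rfl⟩ := h2 a b a' b' (by omega)
      rfl
  · intro k hk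
    rw [Set.mem_Icc] at hk
    by_cases hke : k ≤ e
    · obtain ⟨q, hq, rfl⟩ := f3 (show k ∈ Set.Icc 1 e from ⟨hk.1, hke⟩)
      refine ⟨Sym2.map Sum.inl q, ?_, joinLab_map _ _ _ _⟩
      induction q using Sym2.ind with
      | _ x y => exact (join_ll G x y).2 hq
    · obtain ⟨a, b, hab⟩ := h3 (k - e) (by omega) (by omega)
      refine ⟨s(Sum.inl a, Sum.inr b), join_lr G a b, ?_⟩
      rw [joinLab_mk]
      change e + lab a b = k
      omega

lemma weight_inl {V : Type*} [Fintype V] {n : ℕ} (G : SimpleGraph V) (f : Sym2 V → ℕ) (e : ℕ)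
    (lab : V → Fin n → ℕ) (a : V) :
    vertexWeight (joinG G (⊥ : SimpleGraph (Fin n))) (joinLab f e lab) (Sum.inl a) =
      vertexWeight G f a + (n * e + ∑ b, lab a b) := by
  rw [vertexWeight_eq, vertexWeight_eq, Fintype.sum_sum_type]
  congr 1
  · refine Finset.sum_congr rfl fun y _ => ?_
    simp only [join_ll]
    rfl
  · simp only [join_lr, if_true, joinLab_mk, joinFun, Finset.sum_add_distrib]
    simp

lemma weight_inr {V : Type*} [Fintype V] {n : ℕ} (G : SimpleGraph V) (f : Sym2 V → ℕ) (e : ℕ)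
    (lab : V → Fin n → ℕ) (b : Fin n) :
    vertexWeight (joinG G (⊥ : SimpleGraph (Fin n))) (joinLab f e lab) (Sum.inr b) =
      Fintype.card V * e + ∑ a, lab a b := by
  rw [vertexWeight_eq, Fintype.sum_sum_type]
  simp only [join_rl, join_rr, if_true, if_false, joinLab_mk, joinFun, Finset.sum_add_distrib]
  simp

lemma chiLA_join_upper {V : Type*} [Fintype V] (G : SimpleGraph V) (m n e t : ℕ)
    (hm : Fintype.card V = m) (hm3 : 3 ≤ m) (he : G.edgeSet.ncard = e)
    (f : Sym2 V → ℕ) (hf : IsLocalAntimagic G f) (hcf : colorCount G f = t)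
    (hn : 2 ≤ n) (hpar : m % 2 = n % 2)
    (hne : ∀ u : V,
      2 * (vertexWeight G f u : ℤ) ≠ ((m : ℤ) - (n : ℤ)) * (2 * (e : ℤ) + (m : ℤ) * n + 1)) :
    ∃ g, IsLocalAntimagic (joinG G (⊥ : SimpleGraph (Fin n))) g ∧
      colorCount (joinG G (⊥ : SimpleGraph (Fin n))) g ≤ t + 1 := by
  obtain ⟨lab, h1, h2, h3, h4, h5⟩ := exists_lab hm (Mg.exists hm3 hn hpar)
  obtain ⟨hf1, hf2⟩ := hf
  rw [he] at hf1
  have hbij := joinLab_bij G f hf1 lab h1 h2 h3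
  have hcard : (joinG G (⊥ : SimpleGraph (Fin n))).edgeSet.ncard = e + m * n := by
    rw [← hbij.injOn.ncard_image, hbij.image_eq]
    simp [Set.ncard_eq_toFinset_card']
  have hlr : ∀ a b, vertexWeight (joinG G (⊥ : SimpleGraph (Fin n))) (joinLab f e lab) (Sum.inl a) ≠
      vertexWeight (joinG G (⊥ : SimpleGraph (Fin n))) (joinLab f e lab) (Sum.inr b) := by
    intro a b h
    rw [weight_inl, weight_inr, hm] at h
    apply hne a
    have c1 := h4 a
    have c2 := h5 b
    zify at h c1 c2
    linarith
  have : Nonempty V := Fintype.card_pos_iff.1 (by omega)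
  obtain ⟨a0⟩ := this
  let b0 : Fin n := ⟨0, by omega⟩
  refine ⟨joinLab f e lab, ⟨?_, ?_⟩, ?_⟩
  · rw [hcard]; exact hbij
  · rintro (a | a) (b | b) hab
    · rw [weight_inl, weight_inl]
      have c1 := h4 a
      have c2 := h4 b
      have := hf2 ((join_ll G a b).1 hab)
      omega
    · exact hlr a b
    · exact (hlr b a).symm
    · exact absurd hab (join_rr G a b)
  · have hsub : Finset.univ.image (vertexWeight (joinG G (⊥ : SimpleGraph (Fin n))) (joinLab f e lab)) ⊆
        insert (m * e + ∑ a, lab a b0) ((Finset.univ.image (vertexWeight G f)).image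
          (fun w => w + (n * e + ∑ b, lab a0 b))) := by
      intro k hk
      obtain ⟨x, _, rfl⟩ := Finset.mem_image.1 hk
      rcases x with a | b
      · refine Finset.mem_insert_of_mem (Finset.mem_image.2
          ⟨vertexWeight G f a, Finset.mem_image_of_mem _ (Finset.mem_univ _), ?_⟩)
        rw [weight_inl]
        have c1 := h4 a
        have c2 := h4 a0
        omega
      · rw [weight_inr, hm]
        have c1 := h5 b
        have c2 := h5 b0
        rw [show ∑ a, lab a b = ∑ a, lab a b0 by omega]
        exact Finset.mem_insert_self _ _
    unfold colorCount at *
    refine (Finset.card_le_card hsub).trans ((Finset.card_insert_le _ _).trans ?_)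
    have := Finset.card_image_le (s := Finset.univ.image (vertexWeight G f))
      (f := fun w => w + (n * e + ∑ b, lab a0 b))
    omega

lemma chiLA_join_lower {V : Type*} [Fintype V] (G : SimpleGraph V) (n t : ℕ)
    (hchi : G.chromaticNumber = (t : ℕ∞)) (hn : 2 ≤ n) (g : Sym2 (V ⊕ Fin n) → ℕ)
    (hg : IsLocalAntimagic (joinG G (⊥ : SimpleGraph (Fin n))) g) :
    t + 1 ≤ colorCount (joinG G (⊥ : SimpleGraph (Fin n))) g := by
  set w := vertexWeight (joinG G (⊥ : SimpleGraph (Fin n))) g with hw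
  let b0 : Fin n := ⟨0, by omega⟩
  set S := (Finset.univ.image w).erase (w (Sum.inr b0)) with hS
  have hmem : ∀ a : V, w (Sum.inl a) ∈ S := fun a =>
    Finset.mem_erase.2 ⟨hg.2 (join_lr G a b0), Finset.mem_image_of_mem _ (Finset.mem_univ _)⟩
  let C : G.Coloring {x // x ∈ S} := SimpleGraph.Coloring.mk (fun a => ⟨w (Sum.inl a), hmem a⟩) (by
    intro a b hab h
    exact hg.2 ((join_ll G a b).2 hab) (congrArg Subtype.val h))
  have hcol := C.colorable
  rw [Fintype.card_coe] at hcol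
  have hle := hcol.chromaticNumber_le
  rw [hchi] at hle
  have hle' : t ≤ S.card := by exact_mod_cast hle
  have hmem0 : w (Sum.inr b0) ∈ Finset.univ.image w := Finset.mem_image_of_mem _ (Finset.mem_univ _)
  have h2 : S.card + 1 = (Finset.univ.image w).card := Finset.card_erase_add_one hmem0
  unfold colorCount
  rw [← hw, ← h2]
  omega

/-- Theorem: Let `G` be a graph of order `m ≥ 3` and size `e` with `χ(G) = χ_la(G) = t`.
Suppose there is a local antimagic labeling `f` of `G` with `c(f) = t`. Let `n ≥ 2` with
`m ≡ n (mod 2)`. If `f⁺(u) ≠ (m−n)(2e+mn+1)/2` for every vertex `u`, then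
`χ_la(G ∨ O_n) = χ_la(G) + 1`.  (The inequality is stated multiplied by 2 over `ℤ`, which is
equivalent since `m ≡ n (mod 2)` makes `(m−n)(2e+mn+1)` even.) -/
theorem chiLA_join_nullGraph {V : Type*} [Fintype V] (G : SimpleGraph V) (m n e t : ℕ)
    (hm : Fintype.card V = m) (hm3 : 3 ≤ m)
    (he : G.edgeSet.ncard = e)
    (hchi : G.chromaticNumber = (t : ℕ∞)) (hla : chiLA G = t)
    (f : Sym2 V → ℕ) (hf : IsLocalAntimagic G f) (hcf : colorCount G f = t)
    (hn : 2 ≤ n) (hpar : m % 2 = n % 2)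
    (hne : ∀ u : V,
      2 * (vertexWeight G f u : ℤ) ≠ ((m : ℤ) - (n : ℤ)) * (2 * (e : ℤ) + (m : ℤ) * n + 1)) :
    chiLA (joinG G (⊥ : SimpleGraph (Fin n))) = chiLA G + 1 := by
  obtain ⟨g, hg, hgc⟩ := chiLA_join_upper G m n e t hm hm3 he f hf hcf hn hpar hne
  rw [hla]
  apply le_antisymm
  · refine le_trans (Nat.sInf_le ?_) hgc
    exact ⟨g, hg, rfl⟩
  · unfold chiLA
    obtain ⟨g', hg', hc⟩ := Nat.sInf_mem (s := { k | ∃ f : Sym2 (V ⊕ Fin n) → ℕ,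
      IsLocalAntimagic (joinG G (⊥ : SimpleGraph (Fin n))) f ∧
        colorCount (joinG G (⊥ : SimpleGraph (Fin n))) f = k }) ⟨_, g, hg, rfl⟩
    rw [← hc]
    exact chiLA_join_lower G n t hchi hn g' hg'
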